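/- arXiv:1108.3728 — 5 statements merged into one kernel-verified Lean document; each statement's English description precedes it below -/
import Mathlib

section
/- The distribution preserving rate-distortion function is convex: for any source distribution F_X on ℝ^k, any measurable distortion measure e : ℝ^k × ℝ^k → [0,∞), any distortion levels D₁, D₂ ≥ 0, and any 0 ≤ λ ≤ 1, one has R_DP(λ D₁ + (1−λ) D₂) ≤ λ R_DP(D₁) + (1−λ) R_DP(D₂). -/
open MeasureTheory ProbabilityTheory Real
open scoped ENNReal NNReal Classical

/-- Kullback–Leibler divergence of `μ` from `ν` (in nats), `∞` if `μ` is not absolutely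
continuous w.r.t. `ν` or if the log-likelihood ratio is not integrable. -/
noncomputable def klDiv {α : Type*} [MeasurableSpace α] (μ ν : Measure α) : ℝ≥0∞ :=
  if μ ≪ ν ∧ Integrable (llr μ ν) μ then ENNReal.ofReal (∫ x, llr μ ν x ∂μ) else ⊤

/-- Mutual information of a joint distribution: the KL divergence of the joint law from the
product of its two marginal laws. -/
noncomputable def mutualInfo {α β : Type*} [MeasurableSpace α] [MeasurableSpace β]
    (ρ : Measure (α × β)) : ℝ≥0∞ :=
  klDiv ρ ((ρ.map Prod.fst).prod (ρ.map Prod.snd))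

/-- The distribution preserving rate-distortion function: the infimum of the mutual information
over all joint distributions whose two marginals both equal the source distribution `μ` and whose
expected distortion is at most `D`. -/
noncomputable def RDP {V : Type*} [MeasurableSpace V] (μ : Measure V) (e : V × V → ℝ)
    (D : ℝ≥0∞) : ℝ≥0∞ :=
  ⨅ ρ ∈ {ρ : Measure (V × V) | IsProbabilityMeasure ρ ∧ ρ.map Prod.fst = μ ∧
      ρ.map Prod.snd = μ ∧ ∫⁻ p, ENNReal.ofReal (e p) ∂ρ ≤ D}, mutualInfo ρ

/-!
Mutual information on couplings with fixed marginals is a Kullback–Leibler divergence from a fixed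
product measure, hence an integral of the convex function `klFun` of a density that is affine in the
coupling. The constraint is affine as well, and minimising a convex function under a convex
constraint `g x ≤ r` yields a convex function of the level `r`: mix near-optimal points for the two
levels.
-/

open Set

section ConvexENNReal

lemma convexOn_ofReal_comp_toReal {f : ℝ → ℝ} (hf : ConvexOn ℝ (Ici 0) f) :
    ConvexOn ℝ≥0 {x : ℝ≥0∞ | x ≠ ∞} (fun x ↦ ENNReal.ofReal (f x.toReal)) := by
  have smul_ne_top (c : ℝ≥0) {x : ℝ≥0∞} (hx : x ≠ ∞) : c • x ≠ ∞ :=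
    ENNReal.mul_ne_top ENNReal.coe_ne_top hx
  refine ⟨fun x hx y hy a b _ _ _ ↦
    ENNReal.add_ne_top.2 ⟨smul_ne_top a hx, smul_ne_top b hy⟩, fun x hx y hy a b _ _ hab ↦ ?_⟩
  calc ENNReal.ofReal (f (a • x + b • y).toReal)
      = ENNReal.ofReal (f (a • x.toReal + b • y.toReal)) := by
        rw [ENNReal.toReal_add (smul_ne_top a hx) (smul_ne_top b hy), ENNReal.toReal_smul,
          ENNReal.toReal_smul]
    _ ≤ ENNReal.ofReal (a * f x.toReal + b * f y.toReal) :=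
        ENNReal.ofReal_le_ofReal <| hf.2 ENNReal.toReal_nonneg ENNReal.toReal_nonneg
          a.coe_nonneg b.coe_nonneg (mod_cast hab)
    _ ≤ ENNReal.ofReal (a * f x.toReal) + ENNReal.ofReal (b * f y.toReal) :=
        ENNReal.ofReal_add_le
    _ = a • ENNReal.ofReal (f x.toReal) + b • ENNReal.ofReal (f y.toReal) := by
        rw [ENNReal.ofReal_mul a.coe_nonneg, ENNReal.ofReal_mul b.coe_nonneg,
          ENNReal.ofReal_coe_nnreal, ENNReal.ofReal_coe_nnreal]
        rfl

lemma ofReal_convexCombo_le_of_convexOn {f : ℝ≥0∞ → ℝ≥0∞} (hf : ConvexOn ℝ≥0 univ f)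
    {x y t : ℝ} (hx : 0 ≤ x) (hy : 0 ≤ y) (ht₀ : 0 ≤ t) (ht₁ : t ≤ 1) :
    f (ENNReal.ofReal (t * x + (1 - t) * y)) ≤
      ENNReal.ofReal t * f (ENNReal.ofReal x) +
        ENNReal.ofReal (1 - t) * f (ENNReal.ofReal y) := by
  have ht' : 0 ≤ 1 - t := sub_nonneg.2 ht₁
  have weights_add : t.toNNReal + (1 - t).toNNReal = 1 := by
    rw [← Real.toNNReal_add ht₀ ht', add_sub_cancel, Real.toNNReal_one]
  rw [ENNReal.ofReal_add (mul_nonneg ht₀ hx) (mul_nonneg ht' hy), ENNReal.ofReal_mul ht₀,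
    ENNReal.ofReal_mul ht']
  exact hf.2 (mem_univ _) (mem_univ _) zero_le zero_le weights_add

lemma smul_iInf_of_ne_zero {ι : Sort*} {c : ℝ≥0} (hc : c ≠ 0) (f : ι → ℝ≥0∞) :
    c • ⨅ i, f i = ⨅ i, c • f i :=
  ENNReal.mul_iInf_of_ne (ENNReal.coe_ne_zero.2 hc) ENNReal.coe_ne_top

variable {E β : Type*} [AddCommMonoid E] [Module ℝ≥0 E]
  [AddCommMonoid β] [PartialOrder β] [IsOrderedAddMonoid β] [Module ℝ≥0 β] [PosSMulMono ℝ≥0 β]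

lemma convexOn_iInf_of_le {s : Set E} {f : E → ℝ≥0∞} {g : E → β}
    (hf : ConvexOn ℝ≥0 s f) (hg : ConvexOn ℝ≥0 s g) :
    ConvexOn ℝ≥0 univ (fun r ↦ ⨅ x ∈ {x ∈ s | g x ≤ r}, f x) := by
  refine convexOn_iff_forall_pos.2 ⟨convex_univ, fun r₁ _ r₂ _ a b ha hb hab ↦ ?_⟩
  simp only [smul_iInf_of_ne_zero ha.ne', smul_iInf_of_ne_zero hb.ne']
  refine ENNReal.le_iInf₂_add_iInf₂ fun x ⟨hxs, hx⟩ y ⟨hys, hy⟩ ↦ ?_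
  have combo_le : g (a • x + b • y) ≤ a • r₁ + b • r₂ :=
    (hg.2 hxs hys ha.le hb.le hab).trans <| add_le_add
      (smul_le_smul_of_nonneg_left hx ha.le) (smul_le_smul_of_nonneg_left hy hb.le)
  exact iInf₂_le_of_le (a • x + b • y) ⟨hf.1 hxs hys ha.le hb.le hab, combo_le⟩
    (hf.2 hxs hys ha.le hb.le hab)

end ConvexENNReal

section KullbackLeibler

variable {α : Type*} [MeasurableSpace α]

lemma klDiv_eq_informationTheory_klDiv {μ ν : Measure α} (h : μ univ = ν univ) :
    klDiv μ ν = InformationTheory.klDiv μ ν := by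
  simp only [klDiv, InformationTheory.klDiv_def, measureReal_def, h, add_sub_cancel_right]

lemma convex_setOf_isFiniteMeasure : Convex ℝ≥0 {μ : Measure α | IsFiniteMeasure μ} := by
  rintro μ₁ (_ : IsFiniteMeasure μ₁) μ₂ (_ : IsFiniteMeasure μ₂) a b _ _ _
  exact inferInstanceAs (IsFiniteMeasure (a • μ₁ + b • μ₂))

lemma convex_setOf_isProbabilityMeasure :
    Convex ℝ≥0 {μ : Measure α | IsProbabilityMeasure μ} := by
  rintro μ₁ (_ : IsProbabilityMeasure μ₁) μ₂ (_ : IsProbabilityMeasure μ₂) a b _ _ hab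
  refine ⟨?_⟩
  rw [Measure.add_apply, Measure.smul_apply, Measure.smul_apply, measure_univ, measure_univ,
    ← add_smul, hab, one_smul]

lemma rnDeriv_smul_add_smul (μ₁ μ₂ ν : Measure α) [SigmaFinite μ₁] [SigmaFinite μ₂]
    [SigmaFinite ν] (a b : ℝ≥0) :
    (a • μ₁ + b • μ₂).rnDeriv ν =ᵐ[ν] a • μ₁.rnDeriv ν + b • μ₂.rnDeriv ν :=
  (Measure.rnDeriv_add' _ _ ν).trans
    ((Measure.rnDeriv_smul_left' μ₁ ν a).add (Measure.rnDeriv_smul_left' μ₂ ν b))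

lemma convexOn_lintegral_comp_rnDeriv {f : ℝ → ℝ} (hf : ConvexOn ℝ (Ici 0) f)
    (hfm : Measurable f) (ν : Measure α) [SigmaFinite ν] {s : Set (Measure α)}
    (hs : Convex ℝ≥0 s) (hσ : ∀ μ ∈ s, SigmaFinite μ) :
    ConvexOn ℝ≥0 s (fun μ ↦ ∫⁻ x, ENNReal.ofReal (f (μ.rnDeriv ν x).toReal) ∂ν) := by
  refine ⟨hs, fun μ₁ hμ₁ μ₂ hμ₂ a b ha hb hab ↦ ?_⟩
  have := hσ μ₁ hμ₁
  have := hσ μ₂ hμ₂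
  let φ (x : ℝ≥0∞) : ℝ≥0∞ := ENNReal.ofReal (f x.toReal)
  have hφ : Measurable φ := by fun_prop
  have comp_rnDeriv_le : ∀ᵐ x ∂ν, φ ((a • μ₁ + b • μ₂).rnDeriv ν x) ≤
      a • φ (μ₁.rnDeriv ν x) + b • φ (μ₂.rnDeriv ν x) := by
    filter_upwards [rnDeriv_smul_add_smul μ₁ μ₂ ν a b, μ₁.rnDeriv_ne_top ν, μ₂.rnDeriv_ne_top ν]
      with x hx hx₁ hx₂
    rw [hx]
    exact (convexOn_ofReal_comp_toReal hf).2 hx₁ hx₂ ha hb hab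
  calc ∫⁻ x, φ ((a • μ₁ + b • μ₂).rnDeriv ν x) ∂ν
      ≤ ∫⁻ x, a • φ (μ₁.rnDeriv ν x) + b • φ (μ₂.rnDeriv ν x) ∂ν :=
        lintegral_mono_ae comp_rnDeriv_le
    _ = a • ∫⁻ x, φ (μ₁.rnDeriv ν x) ∂ν + b • ∫⁻ x, φ (μ₂.rnDeriv ν x) ∂ν := by
        simp only [ENNReal.smul_def, smul_eq_mul]
        rw [lintegral_add_left (by fun_prop), lintegral_const_mul _ (by fun_prop),
          lintegral_const_mul _ (by fun_prop)]

lemma convexOn_informationTheory_klDiv_left (ν : Measure α) [IsFiniteMeasure ν] :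
    ConvexOn ℝ≥0 {μ : Measure α | IsFiniteMeasure μ} (InformationTheory.klDiv · ν) := by
  refine convexOn_iff_forall_pos.2 ⟨convex_setOf_isFiniteMeasure, ?_⟩
  rintro μ₁ (hfin₁ : IsFiniteMeasure μ₁) μ₂ (hfin₂ : IsFiniteMeasure μ₂) a b ha hb hab
  have smul_top {c : ℝ≥0} (hc : 0 < c) : c • ∞ = ∞ :=
    ENNReal.mul_top (ENNReal.coe_ne_zero.2 hc.ne')
  by_cases hμ₁ : μ₁ ≪ ν
  swap
  · simp only [InformationTheory.klDiv_of_not_ac hμ₁, smul_top ha, top_add, le_top]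
  by_cases hμ₂ : μ₂ ≪ ν
  swap
  · simp only [InformationTheory.klDiv_of_not_ac hμ₂, smul_top hb, add_top, le_top]
  have hμ : a • μ₁ + b • μ₂ ≪ ν := (hμ₁.smul_left a).add_left (hμ₂.smul_left b)
  simp only [InformationTheory.klDiv_eq_lintegral_klFun_of_ac, hμ, hμ₁, hμ₂]
  exact (convexOn_lintegral_comp_rnDeriv InformationTheory.convexOn_klFun
    InformationTheory.measurable_klFun ν convex_setOf_isFiniteMeasure
    fun μ (_ : IsFiniteMeasure μ) ↦ inferInstance).2 hfin₁ hfin₂ ha.le hb.le hab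

lemma convexOn_klDiv_left (ν : Measure α) [IsProbabilityMeasure ν] :
    ConvexOn ℝ≥0 {μ : Measure α | IsProbabilityMeasure μ} (klDiv · ν) := by
  refine ((convexOn_informationTheory_klDiv_left ν).subset ?_
    convex_setOf_isProbabilityMeasure).congr ?_
  · rintro μ (_ : IsProbabilityMeasure μ)
    exact inferInstanceAs (IsFiniteMeasure μ)
  · rintro μ (_ : IsProbabilityMeasure μ)
    exact (klDiv_eq_informationTheory_klDiv (by rw [measure_univ, measure_univ])).symm

end KullbackLeibler

section Couplings

variable {α β : Type*} [MeasurableSpace α] [MeasurableSpace β]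

/-- The couplings of `μ` and `ν`: the joint probability laws with first marginal `μ` and second
marginal `ν`. The set is empty unless `μ` and `ν` are probability measures. -/
def couplings (μ : Measure α) (ν : Measure β) : Set (Measure (α × β)) :=
  {ρ | IsProbabilityMeasure ρ ∧ ρ.map Prod.fst = μ ∧ ρ.map Prod.snd = ν}

lemma convex_setOf_map_eq {f : α → β} (hf : Measurable f) (ν : Measure β) :
    Convex ℝ≥0 {μ : Measure α | μ.map f = ν} := by
  rintro μ₁ (hμ₁ : μ₁.map f = ν) μ₂ (hμ₂ : μ₂.map f = ν) a b _ _ hab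
  rw [mem_ofPred_eq, Measure.map_add _ _ hf, Measure.map_smul, Measure.map_smul, hμ₁, hμ₂,
    ← add_smul, hab, one_smul]

lemma convex_couplings (μ : Measure α) (ν : Measure β) : Convex ℝ≥0 (couplings μ ν) :=
  convex_setOf_isProbabilityMeasure.inter <|
    (convex_setOf_map_eq measurable_fst μ).inter (convex_setOf_map_eq measurable_snd ν)

lemma convexOn_mutualInfo_couplings (μ : Measure α) (ν : Measure β) :
    ConvexOn ℝ≥0 (couplings μ ν) mutualInfo := by
  rcases (couplings μ ν).eq_empty_or_nonempty with h_empty | ⟨ρ, _, hμ, hν⟩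
  · rw [h_empty]
    exact ⟨convex_empty, fun _ h ↦ h.elim⟩
  have : IsProbabilityMeasure μ := hμ ▸ Measure.isProbabilityMeasure_map (by fun_prop)
  have : IsProbabilityMeasure ν := hν ▸ Measure.isProbabilityMeasure_map (by fun_prop)
  refine ((convexOn_klDiv_left (μ.prod ν)).subset (fun _ h ↦ h.1) (convex_couplings μ ν)).congr ?_
  rintro ρ ⟨_, hμ, hν⟩
  simp only [mutualInfo, hμ, hν]

end Couplings

section RateDistortion

lemma convexOn_lintegral_measure {α : Type*} [MeasurableSpace α] {s : Set (Measure α)}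
    (hs : Convex ℝ≥0 s) (f : α → ℝ≥0∞) : ConvexOn ℝ≥0 s (fun μ ↦ ∫⁻ x, f x ∂μ) :=
  ⟨hs, fun _ _ _ _ _ _ _ _ _ ↦ by
    simp only [lintegral_add_measure, lintegral_smul_measure, le_refl]⟩

variable {V : Type*} [MeasurableSpace V]

lemma RDP_eq_iInf_couplings (μ : Measure V) (e : V × V → ℝ) (D : ℝ≥0∞) :
    RDP μ e D = ⨅ ρ ∈ {ρ ∈ couplings μ μ | ∫⁻ p, ENNReal.ofReal (e p) ∂ρ ≤ D}, mutualInfo ρ := by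
  simp only [RDP, couplings, mem_ofPred_eq, and_assoc]

theorem RDP_convex_general (μ : Measure V) (e : V × V → ℝ) : ConvexOn ℝ≥0 univ (RDP μ e) := by
  rw [funext (RDP_eq_iInf_couplings μ e)]
  exact convexOn_iInf_of_le (convexOn_mutualInfo_couplings μ μ)
    (convexOn_lintegral_measure (convex_couplings μ μ) _)

end RateDistortion

/-- the distribution preserving rate-distortion function is convex. -/
theorem RDP_convex {k : ℕ} (μ : Measure (Fin k → ℝ)) [IsProbabilityMeasure μ]
    (e : (Fin k → ℝ) × (Fin k → ℝ) → ℝ) (he : Measurable e) (he0 : ∀ p, 0 ≤ e p)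
    (D₁ D₂ : ℝ) (hD₁ : 0 ≤ D₁) (hD₂ : 0 ≤ D₂) (l : ℝ) (hl0 : 0 ≤ l) (hl1 : l ≤ 1) :
    RDP μ e (ENNReal.ofReal (l * D₁ + (1 - l) * D₂)) ≤
      ENNReal.ofReal l * RDP μ e (ENNReal.ofReal D₁) +
        ENNReal.ofReal (1 - l) * RDP μ e (ENNReal.ofReal D₂) :=
  ofReal_convexCombo_le_of_convexOn (RDP_convex_general μ e) hD₁ hD₂ hl0 hl1
end

section
/- Let X and X̃ be real random variables, jointly distributed, such that each of X and X̃ has the Gaussian distribution N(μ_X, σ_X²), and such that E[(X − X̃)²] = D with 0 < D < 2σ_X². Then the mutual information satisfies I(X; X̃) ≥ log σ_X² − (1/2) log(σ_X² D − D²/4). -/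
open MeasureTheory ProbabilityTheory Real
open scoped ENNReal NNReal Classical

/-!
Write `N(c, d)` for the Gaussian law with mean `c` and variance `d`. The Gibbs inequality for the
joint law against an exponential tilt of the product of the marginals bounds the mutual information
from below by `E f(X, Y)` for every `f` with `∫ exp f(x, y) dP_X(x) ≤ 1` for all `y`. If
`X ∼ N(m, v)` and `g` is an estimator of `X` from `Y` with mean squared error `d`, the choice
`f(x, y) = log (dN(g y, d) / dN(m, v)) (x)` gives `I(X; Y) ≥ (1/2) log (v / d)`. The best affine
estimator has error `v - cov(X, Y)² / Var Y`, and when `Y` has the mean and variance of `X`,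
`E (X - Y)² = D` says that the covariance is `v - D / 2`.
-/

section DonskerVaradhan

lemma ofReal_integral_sub_log_integral_exp_le_klDiv {α : Type*} [MeasurableSpace α]
    {μ ν : Measure α} [IsProbabilityMeasure μ] [SigmaFinite ν] {f : α → ℝ}
    (hfμ : Integrable f μ) (hfν : Integrable (fun x ↦ exp (f x)) ν) :
    ENNReal.ofReal (∫ x, f x ∂μ - log (∫ x, exp (f x) ∂ν)) ≤ klDiv μ ν := by
  unfold klDiv
  split_ifs with h
  · obtain ⟨hμν, hllr⟩ := h
    have : NeZero ν := ⟨fun hν ↦ IsProbabilityMeasure.ne_zero μ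
      (Measure.absolutelyContinuous_zero_iff.mp (hν ▸ hμν))⟩
    have := isProbabilityMeasure_tilted hfν
    have gibbs := InformationTheory.integral_llr_add_sub_measure_univ_nonneg
      (hμν.trans (absolutelyContinuous_tilted hfν))
      (integrable_llr_tilted_right hμν hfμ hllr hfν)
    rw [integral_llr_tilted_right hμν hfμ hfν hllr, probReal_univ, probReal_univ] at gibbs
    exact ENNReal.ofReal_le_ofReal (by linarith)
  · exact le_top

lemma ofReal_integral_le_klDiv_of_lintegral_exp_le_one {α : Type*} [MeasurableSpace α]
    {μ ν : Measure α} [IsProbabilityMeasure μ] [SigmaFinite ν] {f : α → ℝ}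
    (hf : AEMeasurable f ν) (hfμ : Integrable f μ)
    (hfν : ∫⁻ x, ENNReal.ofReal (exp (f x)) ∂ν ≤ 1) :
    ENNReal.ofReal (∫ x, f x ∂μ) ≤ klDiv μ ν := by
  have exp_nonneg : 0 ≤ᵐ[ν] fun x ↦ exp (f x) := .of_forall fun x ↦ (exp_pos _).le
  have exp_meas : AEStronglyMeasurable (fun x ↦ exp (f x)) ν := hf.exp.aestronglyMeasurable
  have exp_integrable : Integrable (fun x ↦ exp (f x)) ν :=
    (lintegral_ofReal_ne_top_iff_integrable exp_meas exp_nonneg).mp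
      (hfν.trans_lt ENNReal.one_lt_top).ne
  have integral_exp_le : ∫ x, exp (f x) ∂ν ≤ 1 := by
    rw [integral_eq_lintegral_of_nonneg_ae exp_nonneg exp_meas]
    exact ENNReal.toReal_le_of_le_ofReal zero_le_one (by simpa using hfν)
  have log_nonpos : log (∫ x, exp (f x) ∂ν) ≤ 0 :=
    Real.log_nonpos (integral_nonneg fun x ↦ (exp_pos _).le) integral_exp_le
  exact (ENNReal.ofReal_le_ofReal (by linarith)).trans
    (ofReal_integral_sub_log_integral_exp_le_klDiv hfμ exp_integrable)

lemma ofReal_integral_le_mutualInfo_of_lintegral_exp_le_one {α β : Type*} [MeasurableSpace α]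
    [MeasurableSpace β] {ρ : Measure (α × β)} [IsProbabilityMeasure ρ] {f : α × β → ℝ}
    (hf : Measurable f) (hfρ : Integrable f ρ)
    (hexp : ∀ y, ∫⁻ x, ENNReal.ofReal (exp (f (x, y))) ∂ρ.map Prod.fst ≤ 1) :
    ENNReal.ofReal (∫ p, f p ∂ρ) ≤ mutualInfo ρ := by
  have := Measure.isProbabilityMeasure_map (μ := ρ) measurable_fst.aemeasurable
  have := Measure.isProbabilityMeasure_map (μ := ρ) measurable_snd.aemeasurable
  refine ofReal_integral_le_klDiv_of_lintegral_exp_le_one hf.aemeasurable hfρ ?_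
  rw [lintegral_prod_symm _ (by fun_prop)]
  exact (lintegral_mono hexp).trans (by simp)

end DonskerVaradhan

section GaussianLogRatio

variable {m c : ℝ} {v d : ℝ≥0}

/-- The log-likelihood ratio of `N(c, d)` against `N(m, v)`, written with the explicit densities
so that it is defined at every point and jointly measurable in `(c, x)`. -/
noncomputable def gaussianLogRatio (m : ℝ) (v : ℝ≥0) (c : ℝ) (d : ℝ≥0) (x : ℝ) : ℝ :=
  log (gaussianPDFReal c d x / gaussianPDFReal m v x)

lemma log_gaussianPDFReal (hv : v ≠ 0) (x : ℝ) :
    log (gaussianPDFReal m v x) = -(1 / 2) * log (2 * π * v) - (x - m) ^ 2 / (2 * v) := by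
  rw [gaussianPDFReal, log_mul (by positivity) (exp_pos _).ne', log_inv, log_sqrt (by positivity),
    log_exp]
  ring

lemma gaussianLogRatio_eq (hv : v ≠ 0) (hd : d ≠ 0) (x : ℝ) :
    gaussianLogRatio m v c d x =
      1 / 2 * log (v / d) + ((x - m) ^ 2 / (2 * v) - (x - c) ^ 2 / (2 * d)) := by
  have two_pi_ne : 2 * π ≠ 0 := by positivity
  have hv' : (v : ℝ) ≠ 0 := by exact_mod_cast hv
  have hd' : (d : ℝ) ≠ 0 := by exact_mod_cast hd
  rw [gaussianLogRatio,
    log_div (gaussianPDFReal_pos _ _ _ hd).ne' (gaussianPDFReal_pos _ _ _ hv).ne',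
    log_gaussianPDFReal hd, log_gaussianPDFReal hv, log_mul two_pi_ne hd', log_mul two_pi_ne hv',
    log_div hv' hd']
  ring

lemma lintegral_exp_gaussianLogRatio (hv : v ≠ 0) (hd : d ≠ 0) :
    ∫⁻ x, ENNReal.ofReal (exp (gaussianLogRatio m v c d x)) ∂gaussianReal m v = 1 := by
  have hmeas : Measurable (gaussianLogRatio m v c d) :=
    ((measurable_gaussianPDFReal c d).div (measurable_gaussianPDFReal m v)).log
  have mul_exp (x : ℝ) :
      gaussianPDFReal m v x * exp (gaussianLogRatio m v c d x) = gaussianPDFReal c d x := by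
    have hm := gaussianPDFReal_pos m v x hv
    rw [gaussianLogRatio, exp_log (div_pos (gaussianPDFReal_pos c d x hd) hm),
      mul_div_cancel₀ _ hm.ne']
  calc ∫⁻ x, ENNReal.ofReal (exp (gaussianLogRatio m v c d x)) ∂gaussianReal m v
      = ∫⁻ x, gaussianPDF m v x * ENNReal.ofReal (exp (gaussianLogRatio m v c d x)) := by
        rw [gaussianReal_of_var_ne_zero _ hv]
        exact lintegral_withDensity_eq_lintegral_mul _ (measurable_gaussianPDF m v)
          hmeas.exp.ennreal_ofReal
    _ = ∫⁻ x, gaussianPDF c d x := by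
        simp_rw [gaussianPDF, ← ENNReal.ofReal_mul (gaussianPDFReal_nonneg _ _ _), mul_exp]
    _ = 1 := lintegral_gaussianPDF_eq_one c hd

end GaussianLogRatio

section RandomVariables

variable {Ω : Type*} [MeasurableSpace Ω] {P : Measure Ω} {X : Ω → ℝ} {m : ℝ} {v : ℝ≥0}

lemma integral_sub_sq_of_hasLaw_gaussianReal (hX : HasLaw X (gaussianReal m v) P) :
    ∫ ω, (X ω - m) ^ 2 ∂P = v := by
  rw [← variance_id_gaussianReal (μ := m) (v := v), ← hX.variance_eq,
    variance_eq_integral hX.aemeasurable, hX.integral_eq, integral_id_gaussianReal]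

lemma integrable_sub_sq_of_hasLaw_gaussianReal (hX : HasLaw X (gaussianReal m v) P) (c : ℝ) :
    Integrable (fun ω ↦ (X ω - c) ^ 2) P :=
  have := hX.isProbabilityMeasure
  (hX.hasGaussianLaw.memLp_two.sub (memLp_const c)).integrable_sq

lemma integrable_gaussianLogRatio {Z : Ω → ℝ} {d : ℝ≥0} (hX : HasLaw X (gaussianReal m v) P)
    (hv : v ≠ 0) (hd : d ≠ 0) (hZ : Integrable (fun ω ↦ (X ω - Z ω) ^ 2) P) :
    Integrable (fun ω ↦ gaussianLogRatio m v (Z ω) d (X ω)) P := by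
  have := hX.isProbabilityMeasure
  simp_rw [gaussianLogRatio_eq hv hd]
  exact (integrable_const _).add
    (((integrable_sub_sq_of_hasLaw_gaussianReal hX m).div_const _).sub (hZ.div_const _))

lemma integral_gaussianLogRatio {Z : Ω → ℝ} {d : ℝ≥0} (hX : HasLaw X (gaussianReal m v) P)
    (hv : v ≠ 0) (hd : d ≠ 0) (hZ : ∫ ω, (X ω - Z ω) ^ 2 ∂P = d) :
    ∫ ω, gaussianLogRatio m v (Z ω) d (X ω) ∂P = 1 / 2 * log (v / d) := by
  have := hX.isProbabilityMeasure
  have dev_integrable := (integrable_sub_sq_of_hasLaw_gaussianReal hX m).div_const (2 * v)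
  have err_integrable : Integrable (fun ω ↦ (X ω - Z ω) ^ 2 / (2 * d)) P :=
    (Integrable.of_integral_ne_zero (by rw [hZ]; exact_mod_cast hd)).div_const _
  have diff_integrable : Integrable
      (fun ω ↦ (X ω - m) ^ 2 / (2 * v) - (X ω - Z ω) ^ 2 / (2 * d)) P :=
    dev_integrable.sub err_integrable
  simp_rw [gaussianLogRatio_eq hv hd]
  rw [integral_add (integrable_const _) diff_integrable,
    integral_sub dev_integrable err_integrable, integral_div, integral_div, hZ,
    integral_sub_sq_of_hasLaw_gaussianReal hX, integral_const, probReal_univ, one_smul]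
  field_simp
  ring

lemma half_log_var_div_meanSqError_le_mutualInfo {β : Type*} [MeasurableSpace β] {Y : Ω → β}
    {g : β → ℝ} (hX : HasLaw X (gaussianReal m v) P) (hv : v ≠ 0) (hY : AEMeasurable Y P)
    (hg : Measurable g) (herr : 0 < ∫ ω, (X ω - g (Y ω)) ^ 2 ∂P) :
    ENNReal.ofReal (1 / 2 * log (v / ∫ ω, (X ω - g (Y ω)) ^ 2 ∂P)) ≤
      mutualInfo (P.map fun ω ↦ (X ω, Y ω)) := by
  have := hX.isProbabilityMeasure
  have err_integrable := Integrable.of_integral_ne_zero herr.ne'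
  obtain ⟨d, hd⟩ : ∃ d : ℝ≥0, ∫ ω, (X ω - g (Y ω)) ^ 2 ∂P = d := ⟨⟨_, herr.le⟩, rfl⟩
  have hd0 : d ≠ 0 := by rw [hd] at herr; exact_mod_cast herr.ne'
  have hXY : AEMeasurable (fun ω ↦ (X ω, Y ω)) P := hX.aemeasurable.prodMk hY
  have := Measure.isProbabilityMeasure_map hXY
  have fst_law : (P.map fun ω ↦ (X ω, Y ω)).map Prod.fst = gaussianReal m v :=
    (Measure.fst_map_prodMk₀ hY).trans hX.map_eq
  have hf : Measurable fun p : ℝ × β ↦ gaussianLogRatio m v (g p.2) d p.1 := by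
    simp_rw [gaussianLogRatio_eq hv hd0]
    fun_prop
  rw [hd, ← integral_gaussianLogRatio hX hv hd0 hd, ← integral_map hXY hf.aestronglyMeasurable]
  refine ofReal_integral_le_mutualInfo_of_lintegral_exp_le_one hf ?_ fun y ↦ ?_
  · exact (integrable_map_measure hf.aestronglyMeasurable hXY).mpr
      (integrable_gaussianLogRatio hX hv hd0 err_integrable)
  · simp only [fst_law, lintegral_exp_gaussianLogRatio hv hd0, le_refl]

lemma integral_sub_affine_estimator_sq [IsProbabilityMeasure P] {Y : Ω → ℝ} (hX : MemLp X 2 P)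
    (hY : MemLp Y 2 P) (hVar : Var[Y; P] ≠ 0) :
    ∫ ω, (X ω - (P[X] + cov[X, Y; P] / Var[Y; P] * (Y ω - P[Y]))) ^ 2 ∂P =
      Var[X; P] - cov[X, Y; P] ^ 2 / Var[Y; P] := by
  set b := cov[X, Y; P] / Var[Y; P] with hb
  have hbY : MemLp (fun ω ↦ b * Y ω) 2 P := hY.const_mul b
  have mean : P[fun ω ↦ X ω - b * Y ω] = P[X] - b * P[Y] := by
    rw [integral_sub (hX.integrable one_le_two) (hbY.integrable one_le_two), integral_const_mul]
  calc ∫ ω, (X ω - (P[X] + b * (Y ω - P[Y]))) ^ 2 ∂P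
      = Var[fun ω ↦ X ω - b * Y ω; P] := by
        have hsub : AEMeasurable (fun ω ↦ X ω - b * Y ω) P := (hX.sub hbY).aemeasurable
        rw [variance_eq_integral hsub, mean]
        congr with ω
        ring
    _ = Var[X; P] - 2 * (b * cov[X, Y; P]) + b ^ 2 * Var[Y; P] := by
        rw [variance_fun_sub hX hbY, covariance_const_mul_right, variance_const_mul]
    _ = Var[X; P] - cov[X, Y; P] ^ 2 / Var[Y; P] := by
        rw [hb]
        field_simp
        ring

lemma neg_half_log_one_sub_corr_sq_le_mutualInfo {Y : Ω → ℝ}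
    (hX : HasLaw X (gaussianReal m v) P) (hY : MemLp Y 2 P)
    (hcov : cov[X, Y; P] ^ 2 < v * Var[Y; P]) :
    ENNReal.ofReal (-(1 / 2) * log (1 - cov[X, Y; P] ^ 2 / (v * Var[Y; P]))) ≤
      mutualInfo (P.map fun ω ↦ (X ω, Y ω)) := by
  have := hX.isProbabilityMeasure
  have var_prod_pos : 0 < v * Var[Y; P] := (sq_nonneg _).trans_lt hcov
  have hv : v ≠ 0 := by rintro rfl; simp at var_prod_pos
  have hVar : 0 < Var[Y; P] := pos_of_mul_pos_right var_prod_pos v.coe_nonneg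
  have err_eq := integral_sub_affine_estimator_sq hX.hasGaussianLaw.memLp_two hY hVar.ne'
  rw [hX.variance_eq, variance_id_gaussianReal] at err_eq
  have err_pos : 0 < v - cov[X, Y; P] ^ 2 / Var[Y; P] := sub_pos.mpr ((div_lt_iff₀ hVar).mpr hcov)
  have bound := half_log_var_div_meanSqError_le_mutualInfo
    (g := fun y ↦ P[X] + cov[X, Y; P] / Var[Y; P] * (y - P[Y]))
    hX hv hY.aemeasurable (by fun_prop) (err_eq ▸ err_pos)
  rw [err_eq] at bound
  have ratio_eq : v / (v - cov[X, Y; P] ^ 2 / Var[Y; P]) =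
      (1 - cov[X, Y; P] ^ 2 / (v * Var[Y; P]))⁻¹ := by
    rw [← inv_div, sub_div, div_self (by positivity), div_div, mul_comm Var[Y; P]]
  rwa [ratio_eq, log_inv, ← neg_mul_comm] at bound

lemma covariance_eq_half_sub_integral_sub_sq [IsProbabilityMeasure P] {Y : Ω → ℝ}
    (hX : MemLp X 2 P) (hY : MemLp Y 2 P) :
    cov[X, Y; P] =
      (Var[X; P] + Var[Y; P] + (P[X] - P[Y]) ^ 2 - ∫ ω, (X ω - Y ω) ^ 2 ∂P) / 2 := by
  have var_sub : Var[X - Y; P] = ∫ ω, (X ω - Y ω) ^ 2 ∂P - (P[X] - P[Y]) ^ 2 := by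
    rw [variance_eq_sub (hX.sub hY),
      integral_sub' (hX.integrable one_le_two) (hY.integrable one_le_two)]
    rfl
  rw [variance_sub hX hY] at var_sub
  linarith

theorem gaussian_mutualInfo_lower_bound_general {X' : Ω → ℝ} {D : ℝ}
    (hX : HasLaw X (gaussianReal m v) P) (hX' : MemLp X' 2 P) (hmean : P[X'] = m)
    (hvar : Var[X'; P] = v) (hD : ∫ ω, (X ω - X' ω) ^ 2 ∂P = D) (hD0 : 0 < D) (hD4 : D < 4 * v) :
    ENNReal.ofReal (log v - 1 / 2 * log (v * D - D ^ 2 / 4)) ≤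
      mutualInfo (P.map fun ω ↦ (X ω, X' ω)) := by
  have := hX.isProbabilityMeasure
  have hv : (0 : ℝ) < v := by linarith
  have hcov : cov[X, X'; P] = v - D / 2 := by
    rw [covariance_eq_half_sub_integral_sub_sq hX.hasGaussianLaw.memLp_two hX', hX.variance_eq,
      variance_id_gaussianReal, hvar, hX.integral_eq, integral_id_gaussianReal, hmean, hD]
    ring
  have hdet : 0 < v * D - D ^ 2 / 4 := by nlinarith
  have bound := neg_half_log_one_sub_corr_sq_le_mutualInfo hX hX'
    (by rw [hcov, hvar]; linarith)
  rw [hcov, hvar] at bound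
  convert bound using 2
  have one_sub_corr_sq : 1 - (v - D / 2) ^ 2 / (v * v) = (v * D - D ^ 2 / 4) / (v : ℝ) ^ 2 := by
    field_simp
    ring
  rw [one_sub_corr_sq, log_div hdet.ne' (by positivity), log_pow]
  push_cast
  ring

end RandomVariables

/-- if `X` and `X̃` are jointly distributed real random variables, each with the
Gaussian distribution `N(μ_X, σ_X²)`, and `E[(X − X̃)²] = D` with `0 < D < 2σ_X²`, then
`I(X; X̃) ≥ log σ_X² − (1/2) log(σ_X² D − D²/4)`. -/
theorem gaussian_mutualInfo_lower_bound {Ω : Type*} [MeasurableSpace Ω] (P : Measure Ω)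
    [IsProbabilityMeasure P] (X X' : Ω → ℝ) (hXm : Measurable X) (hX'm : Measurable X')
    (μX : ℝ) (v : ℝ≥0) (hX : P.map X = gaussianReal μX v) (hX' : P.map X' = gaussianReal μX v)
    (D : ℝ) (hD : ∫ ω, (X ω - X' ω) ^ 2 ∂P = D) (hD0 : 0 < D) (hD2 : D < 2 * (v : ℝ)) :
    ENNReal.ofReal (Real.log (v : ℝ) - (1 / 2) * Real.log ((v : ℝ) * D - D ^ 2 / 4)) ≤
      mutualInfo (P.map (fun ω => (X ω, X' ω))) := by
  have hX'law : HasLaw X' (gaussianReal μX v) P := ⟨hX'm.aemeasurable, hX'⟩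
  exact gaussian_mutualInfo_lower_bound_general ⟨hXm.aemeasurable, hX⟩
    hX'law.hasGaussianLaw.memLp_two (by rw [hX'law.integral_eq, integral_id_gaussianReal])
    (by rw [hX'law.variance_eq, variance_id_gaussianReal]) hD hD0 (by linarith)
end

section
/- Let X be a Gaussian random variable with mean μ_X and variance σ_X², and let N be a Gaussian random variable with mean 0 and variance σ_N², independent of X. Define X̃ = (σ_X²/(σ_X² + σ_N²))^{1/2} (X − μ_X + N) + μ_X. Then X̃ has the same distribution N(μ_X, σ_X²) as X, and the mean squared error is E[(X − X̃)²] = 2σ_X² (1 − (σ_X²/(σ_X² + σ_N²))^{1/2}). -/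
open MeasureTheory ProbabilityTheory Real
open scoped ENNReal NNReal

/-! Since `X - μX + N` is centred Gaussian with variance `vX + vN`, scaling it by `c` with
`c ^ 2 * (vX + vN) = vX` restores the variance of `X`. The error is
`(1 - c) * (X - μX) + (-c) * N`, a centred combination of uncorrelated variables, so its second
moment is `(1 - c) ^ 2 * vX + c ^ 2 * vN = 2 * vX * (1 - c)`. -/

section

variable {Ω : Type*} [MeasurableSpace Ω] {P : Measure Ω} {X Y : Ω → ℝ} {m₁ m₂ : ℝ} {v₁ v₂ : ℝ≥0}

lemma hasLaw_gaussianReal_add_of_indepFun (hX : HasLaw X (gaussianReal m₁ v₁) P)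
    (hY : HasLaw Y (gaussianReal m₂ v₂) P) (hXY : IndepFun X Y P) :
    HasLaw (fun ω => X ω + Y ω) (gaussianReal (m₁ + m₂) (v₁ + v₂)) P where
  aemeasurable := hX.aemeasurable.add hY.aemeasurable
  map_eq := gaussianReal_add_gaussianReal_of_indepFun hXY hX.map_eq hY.map_eq

lemma hasLaw_gaussianReal_const_mul_add_const (hX : HasLaw X (gaussianReal m₁ v₁) P) {c : ℝ}
    (hv : c ^ 2 * v₁ = v₂) (d : ℝ) :
    HasLaw (fun ω => c * X ω + d) (gaussianReal (c * m₁ + d) v₂) P := by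
  have hv' : .mk (c ^ 2) (sq_nonneg c) * v₁ = v₂ := NNReal.eq hv
  exact hv' ▸ gaussianReal_add_const (gaussianReal_const_mul hX c) d

lemma variance_const_mul_add_const_mul_of_covariance_eq_zero [IsFiniteMeasure P]
    (hX : MemLp X 2 P) (hY : MemLp Y 2 P) (hXY : cov[X, Y; P] = 0) (a b : ℝ) :
    Var[fun ω => a * X ω + b * Y ω; P] = a ^ 2 * Var[X; P] + b ^ 2 * Var[Y; P] := by
  rw [variance_fun_add (hX.const_mul a) (hY.const_mul b), covariance_const_mul_left,
    covariance_const_mul_right, hXY, variance_const_mul, variance_const_mul]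
  ring

lemma integral_sq_sub_const_mul_add_noise [IsProbabilityMeasure P] (hX : MemLp X 2 P)
    (hY : MemLp Y 2 P) (hY_mean : P[Y] = 0) (hXY : cov[X, Y; P] = 0) (c : ℝ) :
    ∫ ω, (X ω - (c * (X ω - P[X] + Y ω) + P[X])) ^ 2 ∂P =
      (1 - c) ^ 2 * Var[X; P] + c ^ 2 * Var[Y; P] := by
  have hX_int : Integrable X P := hX.integrable one_le_two
  have hXc : MemLp (fun ω => X ω - P[X]) 2 P := hX.sub (memLp_const _)
  have hXc_mean : ∫ ω, (X ω - P[X]) ∂P = 0 := by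
    simp [integral_sub hX_int (integrable_const _)]
  have hXcY : cov[fun ω => X ω - P[X], Y; P] = 0 := by
    rw [covariance_sub_const_left hX_int, hXY]
  have h_mean : ∫ ω, ((1 - c) * (X ω - P[X]) + -c * Y ω) ∂P = 0 := by
    rw [integral_add ((hXc.integrable one_le_two).const_mul _)
      ((hY.integrable one_le_two).const_mul _), integral_const_mul, integral_const_mul,
      hXc_mean, hY_mean, mul_zero, mul_zero, add_zero]
  calc ∫ ω, (X ω - (c * (X ω - P[X] + Y ω) + P[X])) ^ 2 ∂P
      = ∫ ω, ((1 - c) * (X ω - P[X]) + -c * Y ω) ^ 2 ∂P := by congr with ω; ring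
    _ = Var[fun ω => (1 - c) * (X ω - P[X]) + -c * Y ω; P] :=
        (variance_of_integral_eq_zero
          ((hXc.const_mul _).add (hY.const_mul _)).aemeasurable h_mean).symm
    _ = (1 - c) ^ 2 * Var[X; P] + c ^ 2 * Var[Y; P] := by
        rw [variance_const_mul_add_const_mul_of_covariance_eq_zero hXc hY hXcY,
          variance_sub_const hX.aestronglyMeasurable, neg_sq]

end

/-- for independent `X ~ N(μ_X, σ_X²)` and `N ~ N(0, σ_N²)`, the random variable
`X̃ = (σ_X²/(σ_X² + σ_N²))^{1/2} (X − μ_X + N) + μ_X` has the same distribution `N(μ_X, σ_X²)`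
as `X`, and `E[(X − X̃)²] = 2σ_X² (1 − (σ_X²/(σ_X² + σ_N²))^{1/2})`. -/
theorem gaussian_forward_channel {Ω : Type*} [MeasurableSpace Ω] (P : Measure Ω)
    [IsProbabilityMeasure P] (X N : Ω → ℝ) (hXm : Measurable X) (hNm : Measurable N)
    (μX : ℝ) (vX vN : ℝ≥0) (hvX : 0 < (vX : ℝ)) (hvN : 0 < (vN : ℝ))
    (hX : P.map X = gaussianReal μX vX) (hN : P.map N = gaussianReal 0 vN)
    (hindep : IndepFun X N P) :
    P.map (fun ω => Real.sqrt ((vX : ℝ) / ((vX : ℝ) + (vN : ℝ))) * (X ω - μX + N ω) + μX) =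
        gaussianReal μX vX ∧
      ∫ ω, (X ω -
          (Real.sqrt ((vX : ℝ) / ((vX : ℝ) + (vN : ℝ))) * (X ω - μX + N ω) + μX)) ^ 2 ∂P =
        2 * (vX : ℝ) * (1 - Real.sqrt ((vX : ℝ) / ((vX : ℝ) + (vN : ℝ)))) := by
  set c := Real.sqrt ((vX : ℝ) / ((vX : ℝ) + (vN : ℝ)))
  have hc : c ^ 2 * ((vX : ℝ) + vN) = vX := by
    rw [Real.sq_sqrt (by positivity), div_mul_cancel₀ _ (by positivity)]
  have hX_law : HasLaw X (gaussianReal μX vX) P := ⟨hXm.aemeasurable, hX⟩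
  have hN_law : HasLaw N (gaussianReal 0 vN) P := ⟨hNm.aemeasurable, hN⟩
  constructor
  · have h_sum : HasLaw (fun ω => X ω - μX + N ω) (gaussianReal 0 (vX + vN)) P := by
      simpa using hasLaw_gaussianReal_add_of_indepFun (gaussianReal_sub_const hX_law μX) hN_law
        (hindep.comp (measurable_id.sub_const μX) measurable_id)
    simpa using (hasLaw_gaussianReal_const_mul_add_const h_sum hc μX).map_eq
  · have hX_memLp : MemLp X 2 P := hX_law.hasGaussianLaw.memLp_two
    have hN_memLp : MemLp N 2 P := hN_law.hasGaussianLaw.memLp_two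
    have hX_mean : P[X] = μX := hX_law.integral_eq.trans integral_id_gaussianReal
    have hN_mean : P[N] = 0 := hN_law.integral_eq.trans integral_id_gaussianReal
    have h_mse := integral_sq_sub_const_mul_add_noise hX_memLp hN_memLp hN_mean
      (hindep.covariance_eq_zero hX_memLp hN_memLp) c
    rw [hX_mean, hX_law.variance_eq, hN_law.variance_eq, variance_id_gaussianReal,
      variance_id_gaussianReal] at h_mse
    linear_combination h_mse + hc
end

section
/- Mean-value property of the dithered quantizer (Lemma): let X be a random vector in ℝ^k with density f_X, let P₀ ⊂ ℝ^k be a compact connected set of positive volume, let N be uniformly distributed over −P₀ and independent of X, and set X̂ = X + N. Assume the conditional c.d.f. F_{X_I|X_J} is continuous. Then for any realization x̂ of X̂ and any two disjoint subsets I, J of {1,…,k}, there exists x̃ ∈ x̂ + P₀ such that F_{X_I|X_J}(x̃_I | x̃_J) = F_{X̂_I|X̂_J}(x̂_I | x̂_J). -/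
open MeasureTheory ProbabilityTheory Real
open scoped ENNReal NNReal Classical

/-- Combine values on coordinates in `J` (taken from `x`) with values outside `J`
(taken from `y`) into a full vector in `ℝ^k`. -/
def glue {k : ℕ} (J : Finset (Fin k)) (x : Fin k → ℝ) (y : {i : Fin k // i ∉ J} → ℝ) :
    Fin k → ℝ :=
  fun i => if h : i ∈ J then x i else y ⟨i, h⟩

/-- Marginal density of the subvector indexed by `J`, obtained from a joint density `f` on
`ℝ^k` by integrating out the coordinates outside `J`.  It is written as a function of a full
vector in `ℝ^k`, but depends only on the coordinates in `J`. -/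
noncomputable def margDen {k : ℕ} (f : (Fin k → ℝ) → ℝ) (J : Finset (Fin k))
    (x : Fin k → ℝ) : ℝ :=
  ∫ y : {i : Fin k // i ∉ J} → ℝ, f (glue J x y)

/-- Numerator of the conditional c.d.f. of the subvector indexed by `I` given the subvector
indexed by `J`, for a joint density `f` on `ℝ^k`: the coordinates in `I` are integrated up to
the corresponding values of `x`, the coordinates in `J` are fixed at the values of `x`, and all
remaining coordinates are integrated out. -/
noncomputable def condCDFNum {k : ℕ} (f : (Fin k → ℝ) → ℝ) (I J : Finset (Fin k))
    (x : Fin k → ℝ) : ℝ :=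
  ∫ y : {i : Fin k // i ∉ J} → ℝ,
    if ∀ i : {i : Fin k // i ∉ J}, i.1 ∈ I → y i ≤ x i.1 then f (glue J x y) else 0

/-- Conditional c.d.f. `F_{X_I | X_J}` derived from a joint density `f` on `ℝ^k`, written as a
function of a full vector (argument coordinates in `I` are the evaluation point of the c.d.f.,
coordinates in `J` are the conditioning values). -/
noncomputable def condCDFd {k : ℕ} (f : (Fin k → ℝ) → ℝ) (I J : Finset (Fin k))
    (x : Fin k → ℝ) : ℝ :=
  condCDFNum f I J x / margDen f J x

/-!
For `τ ∈ P₀`, translating the free coordinates by `τ` turns the numerator and the marginal density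
of `F_{X_I|X_J}` at `x̂ + τ` into integrals of `f (· + τ)` over domains that depend only on `x̂`.
By Fubini, `F_{X̂_I|X̂_J}(x̂)` is therefore the ratio of the integrals over `τ ∈ P₀` of these two
quantities, that is, a weighted mean of `F_{X_I|X_J}(x̂ + τ)` whose weight is the marginal density.
The mean value theorem for integrals on the connected set `P₀` shows that this mean is attained.

Fubini needs `(τ, y) ↦ f (glue J x̂ y + τ)` to be integrable over `P₀ × ℝ^{Jᶜ}`. Each coordinate in
`Jᶜ` is the sum of one from `y` and one from `τ`, so the map into `ℝ^k` pushes the product measure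
to at most the volume of the projection of `P₀` to `ℝ^{Jᶜ}` times Lebesgue measure.
-/

lemma measurePreserving_add_prod {G : Type*} [AddGroup G] [MeasurableSpace G] [MeasurableAdd₂ G]
    (ρ ν : Measure G) [SFinite ρ] [SFinite ν] [ν.IsAddLeftInvariant] :
    MeasurePreserving (fun p : G × G => p.1 + p.2) (ρ.prod ν) (ρ Set.univ • ν) :=
  MeasurePreserving.comp ⟨measurable_snd, Measure.map_snd_prod⟩ (measurePreserving_prod_add ρ ν)

lemma measurePreserving_prod_translate_add {G H : Type*} [AddGroup G] [MeasurableSpace G]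
    [MeasurableAdd G] [AddGroup H] [MeasurableSpace H] [MeasurableAdd₂ H]
    (μ : Measure G) [SFinite μ] [μ.IsAddLeftInvariant]
    (ρ ν : Measure H) [SFinite ρ] [SFinite ν] [ν.IsAddLeftInvariant] (x : G) :
    MeasurePreserving (fun p : (G × H) × H => (x + p.1.1, p.1.2 + p.2))
      ((μ.prod ρ).prod ν) (ρ Set.univ • μ.prod ν) := by
  rw [← Measure.prod_smul_right]
  exact ((measurePreserving_add_left μ x).prod (measurePreserving_add_prod ρ ν)).comp
    (measurePreserving_prodAssoc μ ρ ν)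

lemma measurePreserving_dite_add {ι : Type*} [Fintype ι] (p : ι → Prop) [DecidablePred p]
    (x : ι → ℝ) (B : Set ({i // ¬p i} → ℝ)) :
    MeasurePreserving (fun q : (ι → ℝ) × ({i // ¬p i} → ℝ) =>
        (fun i => if h : p i then x i else q.2 ⟨i, h⟩) + q.1)
      ((volume.restrict (Subtype.restrict (¬p ·) ⁻¹' B)).prod volume) (volume B • volume) := by
  let e := MeasurableEquiv.piEquivPiSubtypeProd (fun _ : ι => ℝ) p
  have he : MeasurePreserving e volume (volume.prod volume) :=
    volume_preserving_piEquivPiSubtypeProd (fun _ : ι => ℝ) p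
  have he_restrict : MeasurePreserving e (volume.restrict (Subtype.restrict (¬p ·) ⁻¹' B))
      (volume.prod (volume.restrict B)) := by
    have h := he.restrict_preimage_emb e.measurableEmbedding (Set.univ ×ˢ B)
    rw [← Measure.prod_restrict, Measure.restrict_univ, Set.univ_prod] at h
    exact h
  have hshear := measurePreserving_prod_translate_add (G := {i // p i} → ℝ)
    volume (volume.restrict B) volume (Subtype.restrict p x)
  rw [Measure.restrict_apply_univ] at hshear
  have hfactor : (fun q : (ι → ℝ) × ({i // ¬p i} → ℝ) =>
      (fun i => if h : p i then x i else q.2 ⟨i, h⟩) + q.1) =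
      e.symm ∘ (fun r => (Subtype.restrict p x + r.1.1, r.1.2 + r.2)) ∘ Prod.map e id := by
    funext q i
    by_cases h : p i <;>
      simp [e, Subtype.restrict, MeasurableEquiv.piEquivPiSubtypeProd,
        Equiv.piEquivPiSubtypeProd, h, add_comm]
  rw [hfactor]
  exact ((he.symm e).smul_measure (volume B)).comp
    (hshear.comp (he_restrict.prod (MeasurePreserving.id volume)))

lemma integrable_of_map_eq_withDensity_ofReal {Ω E : Type*} [MeasurableSpace Ω]
    [MeasurableSpace E] {P : Measure Ω} [IsFiniteMeasure P] {μ : Measure E} {X : Ω → E}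
    {f : E → ℝ} (hfm : AEStronglyMeasurable f μ) (hf0 : 0 ≤ᵐ[μ] f)
    (hX : P.map X = μ.withDensity fun x => ENNReal.ofReal (f x)) : Integrable f μ := by
  refine ⟨hfm, (hasFiniteIntegral_iff_ofReal hf0).2 ?_⟩
  calc ∫⁻ x, ENNReal.ofReal (f x) ∂μ = P.map X Set.univ := by
        rw [hX, withDensity_apply _ MeasurableSet.univ, Measure.restrict_univ]
    _ < ∞ := measure_lt_top _ _

section Glue

variable {k : ℕ} (J : Finset (Fin k)) (x : Fin k → ℝ) {A : Set (Fin k → ℝ)}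
  {f : (Fin k → ℝ) → ℝ}

lemma glue_add_restrict (τ : Fin k → ℝ) (y : {i : Fin k // i ∉ J} → ℝ) :
    glue J (x + τ) (y + Subtype.restrict (· ∉ J) τ) = glue J x y + τ := by
  funext i
  by_cases h : i ∈ J <;> simp [glue, Subtype.restrict, h]

lemma measurePreserving_glue_add (B : Set ({i : Fin k // i ∉ J} → ℝ)) :
    MeasurePreserving (fun p : (Fin k → ℝ) × ({i : Fin k // i ∉ J} → ℝ) => glue J x p.2 + p.1)
      ((volume.restrict (Subtype.restrict (· ∉ J) ⁻¹' B)).prod volume) (volume B • volume) :=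
  measurePreserving_dite_add (· ∈ J) x B

lemma measurable_glue_add :
    Measurable fun p : (Fin k → ℝ) × ({i : Fin k // i ∉ J} → ℝ) => glue J x p.2 + p.1 :=
  (measurePreserving_glue_add J x Set.univ).measurable

lemma exists_map_glue_add_le_smul_volume (hA : Bornology.IsBounded A) :
    ∃ c ≠ ∞, ((volume.restrict A).prod volume).map
      (fun p : (Fin k → ℝ) × ({i : Fin k // i ∉ J} → ℝ) => glue J x p.2 + p.1) ≤ c • volume := by
  let r : (Fin k → ℝ) → {i : Fin k // i ∉ J} → ℝ := Subtype.restrict (· ∉ J)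
  have hr : Bornology.IsBounded (r '' A) := by
    rw [← Bornology.forall_isBounded_image_eval_iff]
    intro i
    rw [Set.image_image]
    exact Bornology.forall_isBounded_image_eval_iff.2 hA i.1
  refine ⟨volume (r '' A), hr.measure_lt_top.ne, ?_⟩
  rw [← (measurePreserving_glue_add J x (r '' A)).map_eq]
  exact Measure.map_mono
    (Measure.prod_mono (Measure.restrict_mono (Set.subset_preimage_image r A) le_rfl) le_rfl)
    (measurable_glue_add J x)

lemma integrable_comp_glue_add (hf : Integrable f) (hA : Bornology.IsBounded A) :
    Integrable (fun p : (Fin k → ℝ) × ({i : Fin k // i ∉ J} → ℝ) => f (glue J x p.2 + p.1))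
      ((volume.restrict A).prod volume) := by
  obtain ⟨c, hc, hle⟩ := exists_map_glue_add_le_smul_volume J x hA
  exact (hf.of_measure_le_smul hc hle).comp_measurable (measurable_glue_add J x)

lemma ae_ae_nonneg_comp_glue_add (hf0 : 0 ≤ᵐ[volume] f) (hA : Bornology.IsBounded A) :
    ∀ᵐ τ ∂volume.restrict A, ∀ᵐ y : {i : Fin k // i ∉ J} → ℝ, 0 ≤ f (glue J x y + τ) := by
  obtain ⟨c, -, hle⟩ := exists_map_glue_add_le_smul_volume J x hA
  have hac := (Measure.absolutelyContinuous_of_le hle).trans Measure.smul_absolutelyContinuous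
  exact Measure.ae_ae_of_ae_prod
    (ae_of_ae_map (measurable_glue_add J x).aemeasurable (hac.ae_le hf0))

end Glue

/-- The event `{Y_I ≤ x_I}` in the space of the coordinates outside `J`, which are the ones
left free once `Y_J` is fixed. The coordinates of `I` lying in `J` impose no constraint. -/
def lowerOrthant {k : ℕ} (I J : Finset (Fin k)) (x : Fin k → ℝ) :
    Set ({i : Fin k // i ∉ J} → ℝ) :=
  {y | ∀ i : {i : Fin k // i ∉ J}, i.1 ∈ I → y i ≤ x i.1}

section CondCDF

variable {k : ℕ} {f : (Fin k → ℝ) → ℝ} (I J : Finset (Fin k)) (x : Fin k → ℝ)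
  {A : Set (Fin k → ℝ)}

lemma measurableSet_lowerOrthant : MeasurableSet (lowerOrthant I J x) := by
  simp only [lowerOrthant, Set.ofPred_forall]
  exact .iInter fun i => .iInter fun _ => measurableSet_le (measurable_pi_apply i) measurable_const

lemma preimage_add_restrict_lowerOrthant (τ : Fin k → ℝ) :
    (· + Subtype.restrict (· ∉ J) τ) ⁻¹' lowerOrthant I J (x + τ) = lowerOrthant I J x := by
  ext y
  simp [lowerOrthant, Subtype.restrict]

lemma condCDFNum_eq_setIntegral (f : (Fin k → ℝ) → ℝ) :
    condCDFNum f I J x = ∫ y in lowerOrthant I J x, f (glue J x y) := by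
  rw [← integral_indicator (measurableSet_lowerOrthant I J x)]
  refine integral_congr_ae (.of_forall fun y => ?_)
  by_cases hy : y ∈ lowerOrthant I J x
  · exact (if_pos hy).trans (Set.indicator_of_mem hy fun z => f (glue J x z)).symm
  · exact (if_neg hy).trans (Set.indicator_of_notMem hy _).symm

lemma condCDFNum_empty (f : (Fin k → ℝ) → ℝ) :
    condCDFNum f ∅ J x = margDen f J x := by
  simp [condCDFNum, margDen]

lemma condCDFNum_add (f : (Fin k → ℝ) → ℝ) (τ : Fin k → ℝ) :
    condCDFNum f I J (x + τ) = ∫ y in lowerOrthant I J x, f (glue J x y + τ) := by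
  rw [condCDFNum_eq_setIntegral, ← (measurePreserving_add_right volume
    (Subtype.restrict (· ∉ J) τ)).setIntegral_preimage_emb (measurableEmbedding_addRight _)]
  simp only [preimage_add_restrict_lowerOrthant, glue_add_restrict]

lemma integrable_comp_glue_add_lowerOrthant (hf : Integrable f) (hA : Bornology.IsBounded A) :
    Integrable (fun p : (Fin k → ℝ) × ({i : Fin k // i ∉ J} → ℝ) => f (glue J x p.2 + p.1))
      ((volume.restrict A).prod (volume.restrict (lowerOrthant I J x))) :=
  (integrable_comp_glue_add J x hf hA).mono_measure
    (Measure.prod_mono le_rfl Measure.restrict_le_self)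

lemma integrableOn_condCDFNum_add (hf : Integrable f) (hA : Bornology.IsBounded A) :
    IntegrableOn (fun τ => condCDFNum f I J (x + τ)) A := by
  simp only [condCDFNum_add]
  exact (integrable_comp_glue_add_lowerOrthant I J x hf hA).integral_prod_left

lemma condCDFNum_const_mul_setIntegral (hf : Integrable f) (hA : Bornology.IsBounded A) (c : ℝ) :
    condCDFNum (fun z => c * ∫ τ in A, f (z + τ)) I J x =
      c * ∫ τ in A, condCDFNum f I J (x + τ) := by
  simp only [condCDFNum_add]
  rw [condCDFNum_eq_setIntegral, integral_const_mul]
  congr 1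
  exact (integral_integral_swap (f := fun τ y => f (glue J x y + τ))
    (integrable_comp_glue_add_lowerOrthant I J x hf hA)).symm

lemma ae_condCDFNum_add_nonneg (hf0 : 0 ≤ᵐ[volume] f) (hA : Bornology.IsBounded A) :
    ∀ᵐ τ ∂volume.restrict A, 0 ≤ condCDFNum f I J (x + τ) := by
  filter_upwards [ae_ae_nonneg_comp_glue_add J x hf0 hA] with τ hτ
  rw [condCDFNum_add]
  exact integral_nonneg_of_ae (ae_restrict_of_ae hτ)

lemma ae_condCDFNum_add_le_margDen_add (hf : Integrable f) (hf0 : 0 ≤ᵐ[volume] f)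
    (hA : Bornology.IsBounded A) :
    ∀ᵐ τ ∂volume.restrict A, condCDFNum f I J (x + τ) ≤ margDen f J (x + τ) := by
  filter_upwards [ae_ae_nonneg_comp_glue_add J x hf0 hA,
    (integrable_comp_glue_add J x hf hA).prod_right_ae] with τ hnonneg hint
  rw [← condCDFNum_empty, condCDFNum_add, condCDFNum_add]
  exact setIntegral_mono_set hint.integrableOn (ae_restrict_of_ae hnonneg)
    (.of_forall fun y _ i hi => absurd hi (Finset.notMem_empty _))

lemma ae_condCDFd_mul_margDen_add (hf : Integrable f) (hf0 : 0 ≤ᵐ[volume] f)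
    (hA : Bornology.IsBounded A) :
    ∀ᵐ τ ∂volume.restrict A,
      condCDFd f I J (x + τ) * margDen f J (x + τ) = condCDFNum f I J (x + τ) := by
  filter_upwards [ae_condCDFNum_add_nonneg I J x hf0 hA,
    ae_condCDFNum_add_le_margDen_add I J x hf hf0 hA] with τ hnonneg hle
  exact div_mul_cancel_of_imp fun hzero => le_antisymm (hzero ▸ hle) hnonneg

lemma exists_setIntegral_condCDFNum_eq_mul (hf : Integrable f) (hf0 : 0 ≤ᵐ[volume] f)
    (hAb : Bornology.IsBounded A) (hAm : MeasurableSet A) (hAconn : IsConnected A)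
    (hcont : ContinuousOn (fun τ => condCDFd f I J (x + τ)) A) :
    ∃ τ ∈ A, ∫ σ in A, condCDFNum f I J (x + σ) =
      condCDFd f I J (x + τ) * ∫ σ in A, margDen f J (x + σ) := by
  have hprod := ae_condCDFd_mul_margDen_add I J x hf hf0 hAb
  have hmarg_int : IntegrableOn (fun τ => margDen f J (x + τ)) A := by
    simpa only [condCDFNum_empty] using integrableOn_condCDFNum_add ∅ J x hf hAb
  have hmarg_nonneg : ∀ᵐ τ ∂volume.restrict A, 0 ≤ margDen f J (x + τ) := by
    simpa only [condCDFNum_empty] using ae_condCDFNum_add_nonneg ∅ J x hf0 hAb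
  rw [← integral_congr_ae hprod]
  exact exists_eq_const_mul_setIntegral_of_ae_nonneg hAconn hAm hcont hmarg_int
    ((integrableOn_condCDFNum_add I J x hf hAb).congr (Filter.EventuallyEq.symm hprod)) hmarg_nonneg

lemma exists_margDen_add_eq_zero (hf : Integrable f) (hf0 : 0 ≤ᵐ[volume] f)
    (hAb : Bornology.IsBounded A) (hAm : MeasurableSet A) (hA0 : 0 < volume A)
    (hzero : ∫ τ in A, margDen f J (x + τ) = 0) : ∃ τ ∈ A, margDen f J (x + τ) = 0 := by
  simp only [← condCDFNum_empty] at hzero ⊢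
  have hae := (integral_eq_zero_iff_of_nonneg_ae (ae_condCDFNum_add_nonneg ∅ J x hf0 hAb)
    (integrableOn_condCDFNum_add ∅ J x hf hAb)).1 hzero
  have : (ae (volume.restrict A)).NeBot := ae_restrict_neBot.2 hA0.ne'
  exact ((ae_restrict_mem hAm).and hae).exists

end CondCDF

theorem dithered_quantizer_mean_value_general {k : ℕ} {f : (Fin k → ℝ) → ℝ}
    (hf : Integrable f) (hf0 : 0 ≤ᵐ[volume] f)
    {P₀ : Set (Fin k → ℝ)} (hP₀b : Bornology.IsBounded P₀) (hP₀m : MeasurableSet P₀)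
    (hP₀conn : IsConnected P₀) (hV : 0 < volume P₀)
    (I J : Finset (Fin k)) (xh : Fin k → ℝ)
    (hcont : ContinuousOn (fun τ => condCDFd f I J (xh + τ)) P₀) :
    ∃ xt : Fin k → ℝ, xt - xh ∈ P₀ ∧
      condCDFd f I J xt =
        condCDFd (fun x => (volume P₀).toReal⁻¹ * ∫ τ in P₀, f (x + τ)) I J xh := by
  have hVinv : (volume P₀).toReal⁻¹ ≠ 0 :=
    inv_ne_zero (ENNReal.toReal_pos hV.ne' hP₀b.measure_lt_top.ne).ne'
  suffices h : ∃ τ ∈ P₀, condCDFd f I J (xh + τ) =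
      (∫ σ in P₀, condCDFNum f I J (xh + σ)) / ∫ σ in P₀, margDen f J (xh + σ) by
    obtain ⟨τ, hτ, heq⟩ := h
    refine ⟨xh + τ, by rwa [add_sub_cancel_left], ?_⟩
    rw [heq, condCDFd, ← condCDFNum_empty, condCDFNum_const_mul_setIntegral I J xh hf hP₀b,
      condCDFNum_const_mul_setIntegral ∅ J xh hf hP₀b, mul_div_mul_left _ _ hVinv]
    simp only [condCDFNum_empty]
  by_cases hzero : ∫ σ in P₀, margDen f J (xh + σ) = 0
  -- Here `x / 0 = 0` makes both conditional c.d.f.s vanish where the marginal density does.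
  · obtain ⟨τ, hτ, hmarg⟩ := exists_margDen_add_eq_zero J xh hf hf0 hP₀b hP₀m hV hzero
    exact ⟨τ, hτ, by rw [condCDFd, hmarg, hzero, div_zero, div_zero]⟩
  · obtain ⟨τ, hτ, hmean⟩ :=
      exists_setIntegral_condCDFNum_eq_mul I J xh hf hf0 hP₀b hP₀m hP₀conn hcont
    exact ⟨τ, hτ, eq_div_of_mul_eq hzero hmean.symm⟩

/-- mean-value property of the dithered quantizer.  Let `X` have density `f` on
`ℝ^k`, let `P₀` be a compact connected set of positive volume, let `N` be uniform over `−P₀`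
and independent of `X`, and `X̂ = X + N`.  If the conditional c.d.f. `F_{X_I|X_J}` is
continuous, then for any realization `x̂` of `X̂` and any two disjoint subsets `I`, `J` of the
coordinates there exists `x̃ ∈ x̂ + P₀` with
`F_{X_I|X_J}(x̃_I | x̃_J) = F_{X̂_I|X̂_J}(x̂_I | x̂_J)`. -/
theorem dithered_quantizer_mean_value {Ω : Type*} [MeasurableSpace Ω]
    (P : Measure Ω) [IsProbabilityMeasure P] {k : ℕ} (X N : Ω → (Fin k → ℝ))
    (hXm : Measurable X) (hNm : Measurable N)
    (f : (Fin k → ℝ) → ℝ) (hfm : Measurable f) (hf0 : ∀ x, 0 ≤ f x)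
    (hX : P.map X = volume.withDensity (fun x => ENNReal.ofReal (f x)))
    (P₀ : Set (Fin k → ℝ)) (hP₀c : IsCompact P₀) (hP₀conn : IsConnected P₀)
    (hV : 0 < volume P₀)
    (hN : P.map N = (volume P₀)⁻¹ • volume.restrict (-P₀))
    (hindep : IndepFun X N P)
    (I J : Finset (Fin k)) (hIJ : Disjoint I J)
    (hcont : Continuous (condCDFd f I J)) :
    ∀ xh : Fin k → ℝ, ∃ xt : Fin k → ℝ, xt - xh ∈ P₀ ∧
      condCDFd f I J xt =
        condCDFd (fun x => (volume P₀).toReal⁻¹ * ∫ τ in P₀, f (x + τ)) I J xh := by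
  have hf := integrable_of_map_eq_withDensity_ofReal hfm.aestronglyMeasurable (.of_forall hf0) hX
  exact fun xh => dithered_quantizer_mean_value_general hf (.of_forall hf0) hP₀c.isBounded
    hP₀c.measurableSet hP₀conn hV I J xh (hcont.comp (continuous_const_add xh)).continuousOn
end

section
/- Gaussian limit of ball averages (Lemma): let m ≥ 1 be an integer, η > 0, and f : ℝ^m → ℝ a bounded measurable function. Then lim_{k→∞} (1/B_k(k^{1/2} η)) ∫_{B_k(k^{1/2} η)} f(τ₁,…,τ_m) dτ = ∫_{ℝ^m} f(τ) (2πη²)^{−m/2} exp(−‖τ‖²/(2η²)) dτ, where B_k(r) denotes the k-dimensional Euclidean ball of radius r (and its volume π^{k/2} r^k / Γ(k/2 + 1)). -/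
open MeasureTheory Real Filter Topology
open scoped ENNReal NNReal

/-- The volume of the `n`-dimensional Euclidean ball of radius `r`:
`π^{n/2} r^n / Γ(n/2 + 1)`. -/
noncomputable def Bvol (n : ℕ) (r : ℝ) : ℝ :=
  Real.pi ^ ((n : ℝ) / 2) * r ^ n / Real.Gamma ((n : ℝ) / 2 + 1)

/-- The `n`-dimensional Euclidean ball of radius `r` centered at the origin, as a subset of
`ℝ^n` (with the Euclidean norm). -/
def euclBall (n : ℕ) (r : ℝ) : Set (Fin n → ℝ) :=
  {x | ∑ i, (x i) ^ 2 ≤ r ^ 2}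

/-!
Projecting the ball of `ℝ^(m + k)` to its first `m` coordinates gives the density
`u ↦ Bvol k √(r² - |u|²)`, which is `√(1 - |u|² / r²) ^ k` up to a factor independent of `u`. With
`r = √(m + k) η` this profile tends to the Gaussian `exp (-|u|² / (2 η²))`, and it is dominated by a
multiple of the same Gaussian, because `1 - s / (m + k) ≤ 1 + (m - s) / k ≤ exp ((m - s) / k)` as
long as the left-hand side is nonnegative. Applying dominated convergence also to `f = 1` yields the
limit of the normalizing constants, so the asymptotics of the Gamma function are not needed.
-/

section Volume

theorem Bvol_pos (n : ℕ) {r : ℝ} (hr : 0 < r) : 0 < Bvol n r :=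
  div_pos (by positivity) (Gamma_pos_of_pos (by positivity))

theorem Bvol_nonneg (n : ℕ) {r : ℝ} (hr : 0 ≤ r) : 0 ≤ Bvol n r :=
  div_nonneg (by positivity) (Gamma_nonneg_of_nonneg (by positivity))

theorem Bvol_mul (n : ℕ) (r s : ℝ) : Bvol n (r * s) = Bvol n r * s ^ n := by
  unfold Bvol
  rw [mul_pow]
  ring

@[fun_prop]
theorem continuous_Bvol (n : ℕ) : Continuous (Bvol n) := by
  unfold Bvol
  fun_prop

theorem measurableSet_euclBall (n : ℕ) (r : ℝ) : MeasurableSet (euclBall n r) :=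
  measurableSet_le (by fun_prop) measurable_const

theorem euclBall_eq_preimage_closedBall (n : ℕ) {r : ℝ} (hr : 0 ≤ r) :
    euclBall n r = WithLp.toLp 2 ⁻¹' Metric.closedBall (0 : EuclideanSpace ℝ (Fin n)) r := by
  ext x
  simp only [euclBall, Set.mem_ofPred_eq, Set.mem_preimage, mem_closedBall_zero_iff,
    EuclideanSpace.norm_eq, norm_eq_abs, sq_abs, sqrt_le_left hr]

theorem volume_euclBall (n : ℕ) {r : ℝ} (hr : 0 ≤ r) :
    volume (euclBall n r) = ENNReal.ofReal (Bvol n r) := by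
  rcases n.eq_zero_or_pos with rfl | hn
  · simp [euclBall, Bvol, sq_nonneg, volume_pi]
  have : Nonempty (Fin n) := ⟨⟨0, hn⟩⟩
  have hsqrt : √π ^ n = π ^ ((n : ℝ) / 2) := by
    rw [sqrt_eq_rpow, ← rpow_mul_natCast pi_nonneg, one_div_mul_eq_div]
  rw [euclBall_eq_preimage_closedBall n hr,
    (PiLp.volume_preserving_toLp (Fin n)).measure_preimage
      Metric.isClosed_closedBall.nullMeasurableSet,
    EuclideanSpace.volume_closedBall, Fintype.card_fin, hsqrt, ← ENNReal.ofReal_pow hr,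
    ← ENNReal.ofReal_mul (by positivity), mul_div_left_comm, ← mul_div_assoc, Bvol]

theorem volume_real_euclBall (n : ℕ) {r : ℝ} (hr : 0 ≤ r) :
    volume.real (euclBall n r) = Bvol n r := by
  rw [Measure.real, volume_euclBall n hr, ENNReal.toReal_ofReal (Bvol_nonneg n hr)]

-- For `R < 0` both sides vanish, since `√R = 0`.
theorem volume_setOf_sum_sq_le {n : ℕ} (hn : n ≠ 0) (R : ℝ) :
    volume {x : Fin n → ℝ | ∑ i, x i ^ 2 ≤ R} = ENNReal.ofReal (Bvol n √R) := by
  rcases le_or_gt 0 R with hR | hR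
  · rw [← volume_euclBall n (sqrt_nonneg R), euclBall, sq_sqrt hR]
  · have hempty : {x : Fin n → ℝ | ∑ i, x i ^ 2 ≤ R} = ∅ :=
      Set.eq_empty_of_forall_notMem fun x hx =>
        (hR.trans_le (Finset.sum_nonneg fun i _ => sq_nonneg (x i))).not_ge hx
    rw [hempty, measure_empty, sqrt_eq_zero_of_nonpos hR.le, Bvol, zero_pow hn]
    simp

end Volume

section Slicing

theorem measurePreserving_finAppend (m k : ℕ) :
    MeasurePreserving (fun p : (Fin m → ℝ) × (Fin k → ℝ) => Fin.append p.1 p.2) := by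
  have hreindex := (volume_measurePreserving_piCongrLeft (fun _ : Fin (m + k) => ℝ)
    finSumFinEquiv).comp
      (volume_measurePreserving_sumPiEquivProdPi_symm (fun _ : Fin m ⊕ Fin k => ℝ))
  suffices happend : (fun p : (Fin m → ℝ) × (Fin k → ℝ) => Fin.append p.1 p.2) =
      MeasurableEquiv.piCongrLeft (fun _ : Fin (m + k) => ℝ) finSumFinEquiv ∘
        (MeasurableEquiv.sumPiEquivProdPi fun _ : Fin m ⊕ Fin k => ℝ).symm from
    happend ▸ hreindex
  funext p i
  obtain ⟨j, rfl⟩ := finSumFinEquiv.surjective i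
  simp only [Function.comp_apply, MeasurableEquiv.coe_piCongrLeft, Equiv.piCongrLeft_apply_apply]
  cases j <;> simp [MeasurableEquiv.coe_sumPiEquivProdPi_symm]

theorem finAppend_mem_euclBall_iff {m k : ℕ} {r : ℝ} {u : Fin m → ℝ} {v : Fin k → ℝ} :
    Fin.append u v ∈ euclBall (m + k) r ↔ ∑ i, v i ^ 2 ≤ r ^ 2 - ∑ i, u i ^ 2 := by
  simp only [euclBall, Set.mem_ofPred_eq, Fin.sum_univ_add, Fin.append_left, Fin.append_right,
    le_sub_iff_add_le']

variable {m k : ℕ}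

theorem map_castAdd_restrict_euclBall (hk : k ≠ 0) (r : ℝ) :
    (volume.restrict (euclBall (m + k) r)).map (fun τ i => τ (Fin.castAdd k i)) =
      volume.withDensity fun u : Fin m → ℝ => ENNReal.ofReal (Bvol k √(r ^ 2 - ∑ i, u i ^ 2)) := by
  ext s hs
  have hproj : Measurable fun (τ : Fin (m + k) → ℝ) (i : Fin m) => τ (Fin.castAdd k i) := by
    fun_prop
  have hpre := (hproj hs).inter (measurableSet_euclBall (m + k) r)
  rw [Measure.map_apply hproj hs, Measure.restrict_apply (hproj hs), withDensity_apply _ hs,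
    ← (measurePreserving_finAppend m k).measure_preimage hpre.nullMeasurableSet,
    Measure.volume_eq_prod,
    Measure.prod_apply ((measurePreserving_finAppend m k).measurable hpre),
    ← lintegral_indicator hs]
  congr 1 with u
  by_cases hu : u ∈ s
  · simp [hu, Set.preimage, finAppend_mem_euclBall_iff, volume_setOf_sum_sq_le hk]
  · simp [hu, Set.preimage]

variable {E : Type*} [NormedAddCommGroup E] [NormedSpace ℝ E]

theorem setIntegral_euclBall_comp_castAdd (hk : k ≠ 0) (r : ℝ) {f : (Fin m → ℝ) → E}
    (hf : AEStronglyMeasurable f) :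
    ∫ τ in euclBall (m + k) r, f (fun i => τ (Fin.castAdd k i)) =
      ∫ u, Bvol k √(r ^ 2 - ∑ i, u i ^ 2) • f u := by
  have hdensity : Measurable fun u : Fin m → ℝ =>
      ENNReal.ofReal (Bvol k √(r ^ 2 - ∑ i, u i ^ 2)) := by
    fun_prop
  have hfmap : AEStronglyMeasurable f
      ((volume.restrict (euclBall (m + k) r)).map fun τ i => τ (Fin.castAdd k i)) := by
    rw [map_castAdd_restrict_euclBall hk]
    exact hf.mono_ac (withDensity_absolutelyContinuous _ _)
  rw [← integral_map (Measurable.aemeasurable (by fun_prop)) hfmap,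
    map_castAdd_restrict_euclBall hk,
    integral_withDensity_eq_integral_toReal_smul hdensity (by simp)]
  simp only [ENNReal.toReal_ofReal (Bvol_nonneg k (sqrt_nonneg _))]

end Slicing

section SliceRatio

variable {ι : Type*} [Fintype ι]

/-- For the Euclidean ball of radius `r` in `(ι → ℝ) × (Fin k → ℝ)`, the volume of the slice above
`u` divided by the volume of the slice above `0`; up to normalization this is the density of the
projection of the ball to `ι → ℝ`. When `u` lies outside the ball the slice is empty, and
for `k ≠ 0` the formula gives `0` because `√x = 0` for `x < 0`. -/
noncomputable def sliceRatio (k : ℕ) (r : ℝ) (u : ι → ℝ) : ℝ :=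
  √(1 - (∑ i, u i ^ 2) / r ^ 2) ^ k

theorem sliceRatio_nonneg (k : ℕ) (r : ℝ) (u : ι → ℝ) :
    0 ≤ sliceRatio k r u :=
  pow_nonneg (sqrt_nonneg _) k

theorem measurable_sliceRatio (k : ℕ) (r : ℝ) :
    Measurable (sliceRatio k r : (ι → ℝ) → ℝ) := by
  unfold sliceRatio
  fun_prop

theorem Bvol_sqrt_sq_sub (k : ℕ) {r : ℝ} (hr : 0 < r) (u : ι → ℝ) :
    Bvol k √(r ^ 2 - ∑ i, u i ^ 2) = Bvol k r * sliceRatio k r u := by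
  have hfactor : r ^ 2 - ∑ i, u i ^ 2 = r ^ 2 * (1 - (∑ i, u i ^ 2) / r ^ 2) := by
    field_simp
  rw [hfactor, sqrt_mul (sq_nonneg r), sqrt_sq hr.le, Bvol_mul, sliceRatio]

variable {m k : ℕ} {r : ℝ} {E : Type*} [NormedAddCommGroup E] [NormedSpace ℝ E]

theorem setIntegral_euclBall_eq_Bvol_smul_integral (hk : k ≠ 0) (hr : 0 < r)
    {f : (Fin m → ℝ) → E} (hf : AEStronglyMeasurable f) :
    ∫ τ in euclBall (m + k) r, f (fun i => τ (Fin.castAdd k i)) =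
      Bvol k r • ∫ u, sliceRatio k r u • f u := by
  simp only [setIntegral_euclBall_comp_castAdd hk r hf, Bvol_sqrt_sq_sub k hr, mul_smul,
    integral_smul]

theorem Bvol_add_eq_mul_integral_sliceRatio (hk : k ≠ 0) (hr : 0 < r) :
    Bvol (m + k) r = Bvol k r * ∫ u : Fin m → ℝ, sliceRatio k r u := by
  have hone := setIntegral_euclBall_eq_Bvol_smul_integral (m := m) hk hr
    (f := fun _ => (1 : ℝ)) aestronglyMeasurable_const
  simpa [volume_real_euclBall _ hr.le] using hone

theorem inv_Bvol_smul_setIntegral_euclBall (hk : k ≠ 0) (hr : 0 < r)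
    {f : (Fin m → ℝ) → E} (hf : AEStronglyMeasurable f) :
    (Bvol (m + k) r)⁻¹ • ∫ τ in euclBall (m + k) r, f (fun i => τ (Fin.castAdd k i)) =
      (∫ u : Fin m → ℝ, sliceRatio k r u)⁻¹ • ∫ u, sliceRatio k r u • f u := by
  rw [setIntegral_euclBall_eq_Bvol_smul_integral hk hr hf,
    Bvol_add_eq_mul_integral_sliceRatio hk hr, smul_smul, mul_inv, mul_right_comm,
    inv_mul_cancel₀ (Bvol_pos k hr).ne', one_mul]

end SliceRatio

section GaussianLimit

theorem tendsto_sqrt_one_sub_div_add_pow (a s : ℝ) :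
    Tendsto (fun k : ℕ => √(1 - s / (a + k)) ^ k) atTop (𝓝 (rexp (-s / 2))) := by
  have hbase : Tendsto (fun k : ℕ => 1 + -s / (a + k)) atTop (𝓝 1) := by
    simpa using (tendsto_const_nhds.div_atTop
      (tendsto_atTop_add_const_left _ a tendsto_natCast_atTop_atTop)).const_add 1
  have hpow : Tendsto (fun k : ℕ => (1 + -s / (a + k)) ^ k) atTop (𝓝 (rexp (-s))) := by
    refine tendsto_one_add_pow_exp_of_tendsto ?_
    have hratio := (tendsto_natCast_div_add_atTop a).const_mul (-s)
    rw [mul_one] at hratio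
    exact hratio.congr fun k => by rw [add_comm a, mul_div_left_comm]
  rw [exp_half]
  refine hpow.sqrt.congr' ?_
  filter_upwards [hbase.eventually_const_lt one_pos] with k hk
  rw [neg_div, ← sub_eq_add_neg] at hk ⊢
  rw [sqrt_eq_iff_eq_sq (by positivity) (by positivity), pow_right_comm, sq_sqrt hk.le]

theorem sqrt_one_sub_div_add_pow_le {a : ℝ} (ha : 0 ≤ a) {k : ℕ} (hk : k ≠ 0) (s : ℝ) :
    √(1 - s / (a + k)) ^ k ≤ rexp (a / 2) * rexp (-s / 2) := by
  have hbase : 1 - s / (a + k) ≤ rexp ((a - s) / k) := by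
    rcases le_total (a + k) s with hs | hs
    · have : 1 ≤ s / (a + k) := (one_le_div₀ (by positivity)).2 hs
      linarith [exp_nonneg ((a - s) / k)]
    calc 1 - s / (a + k) = (a + k - s) / (a + k) := by field_simp
      _ ≤ (a + k - s) / k := by gcongr; linarith
      _ = (a - s) / k + 1 := by field_simp; ring
      _ ≤ rexp ((a - s) / k) := add_one_le_exp _
  calc √(1 - s / (a + k)) ^ k ≤ rexp ((a - s) / k / 2) ^ k := by
        rw [exp_half]
        gcongr
    _ = rexp (a / 2) * rexp (-s / 2) := by
        rw [← exp_nat_mul, ← exp_add]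
        congr 1
        field_simp
        ring

variable {ι : Type*} [Fintype ι] {η : ℝ}

theorem sliceRatio_sqrt_mul (k : ℕ) {a : ℝ} (ha : 0 ≤ a) (η : ℝ) (u : ι → ℝ) :
    sliceRatio k (√a * η) u = √(1 - (∑ i, u i ^ 2) / η ^ 2 / a) ^ k := by
  rw [sliceRatio, mul_pow, sq_sqrt ha, div_div, mul_comm a]

theorem tendsto_sliceRatio {a : ℝ} (ha : 0 ≤ a) (η : ℝ) (u : ι → ℝ) :
    Tendsto (fun k : ℕ => sliceRatio k (√(a + k) * η) u) atTop
      (𝓝 (rexp (-(∑ i, u i ^ 2) / (2 * η ^ 2)))) := by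
  have hscalar := tendsto_sqrt_one_sub_div_add_pow a ((∑ i, u i ^ 2) / η ^ 2)
  rw [← neg_div, div_div, mul_comm (η ^ 2)] at hscalar
  exact hscalar.congr fun k => (sliceRatio_sqrt_mul k (by positivity) η u).symm

theorem sliceRatio_le_exp_mul_exp {a : ℝ} (ha : 0 ≤ a) {k : ℕ} (hk : k ≠ 0) (η : ℝ) (u : ι → ℝ) :
    sliceRatio k (√(a + k) * η) u ≤ rexp (a / 2) * rexp (-(∑ i, u i ^ 2) / (2 * η ^ 2)) := by
  have hscalar := sqrt_one_sub_div_add_pow_le ha hk ((∑ i, u i ^ 2) / η ^ 2)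
  rwa [← sliceRatio_sqrt_mul k (by positivity), ← neg_div, div_div, mul_comm (η ^ 2)] at hscalar

theorem exp_neg_sum_sq_div (η : ℝ) (u : ι → ℝ) :
    rexp (-(∑ i, u i ^ 2) / (2 * η ^ 2)) = ∏ i, rexp (-(2 * η ^ 2)⁻¹ * u i ^ 2) := by
  rw [← exp_sum, ← Finset.mul_sum, neg_div, div_eq_inv_mul, neg_mul]

theorem integrable_exp_neg_sum_sq_div (hη : η ≠ 0) :
    Integrable fun u : ι → ℝ => rexp (-(∑ i, u i ^ 2) / (2 * η ^ 2)) := by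
  simp only [exp_neg_sum_sq_div]
  exact Integrable.fintype_prod fun _ => integrable_exp_neg_mul_sq (by positivity)

theorem integral_exp_neg_sum_sq_div (η : ℝ) :
    ∫ u : ι → ℝ, rexp (-(∑ i, u i ^ 2) / (2 * η ^ 2)) =
      (2 * π * η ^ 2) ^ ((Fintype.card ι : ℝ) / 2) := by
  simp only [exp_neg_sum_sq_div]
  rw [integral_fintype_prod_volume_eq_pow fun x : ℝ => rexp (-(2 * η ^ 2)⁻¹ * x ^ 2),
    integral_gaussian, div_inv_eq_mul, sqrt_eq_rpow, ← rpow_mul_natCast (by positivity),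
    one_div_mul_eq_div, mul_left_comm π, mul_assoc]

variable {E : Type*} [NormedAddCommGroup E] [NormedSpace ℝ E] {f : (ι → ℝ) → E}

theorem aestronglyMeasurable_exp_smul_iff :
    AEStronglyMeasurable (fun u => rexp (-(∑ i, u i ^ 2) / (2 * η ^ 2)) • f u) ↔
      AEStronglyMeasurable f :=
  aestronglyMeasurable_smul_iff₀ (Measurable.aestronglyMeasurable (by fun_prop))
    (.of_forall fun _ => exp_ne_zero _)

theorem tendsto_integral_sliceRatio_smul {a : ℝ} (ha : 0 ≤ a)
    (hf : Integrable fun u => rexp (-(∑ i, u i ^ 2) / (2 * η ^ 2)) • f u) :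
    Tendsto (fun k : ℕ => ∫ u, sliceRatio k (√(a + k) * η) u • f u) atTop
      (𝓝 (∫ u, rexp (-(∑ i, u i ^ 2) / (2 * η ^ 2)) • f u)) := by
  have hfm := aestronglyMeasurable_exp_smul_iff.1 hf.1
  refine tendsto_integral_filter_of_dominated_convergence
    (fun u => rexp (a / 2) * ‖rexp (-(∑ i, u i ^ 2) / (2 * η ^ 2)) • f u‖)
    (.of_forall fun k => (measurable_sliceRatio k _).aestronglyMeasurable.smul hfm) ?_
    (hf.norm.const_mul _) (.of_forall fun u => (tendsto_sliceRatio ha η u).smul_const (f u))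
  filter_upwards [eventually_ne_atTop 0] with k hk
  refine .of_forall fun u => ?_
  rw [norm_smul, norm_smul, norm_of_nonneg (sliceRatio_nonneg k _ u), norm_of_nonneg (exp_nonneg _),
    ← mul_assoc]
  gcongr
  exact sliceRatio_le_exp_mul_exp ha hk η u

theorem tendsto_integral_sliceRatio {a : ℝ} (ha : 0 ≤ a) (hη : η ≠ 0) :
    Tendsto (fun k : ℕ => ∫ u : ι → ℝ, sliceRatio k (√(a + k) * η) u) atTop
      (𝓝 ((2 * π * η ^ 2) ^ ((Fintype.card ι : ℝ) / 2))) := by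
  have hone := tendsto_integral_sliceRatio_smul (ι := ι) (f := fun _ => (1 : ℝ)) (η := η) ha
    (by simpa using integrable_exp_neg_sum_sq_div hη)
  simpa only [smul_eq_mul, mul_one, integral_exp_neg_sum_sq_div] using hone

end GaussianLimit

theorem ball_average_gaussian_limit_general {m : ℕ} {E : Type*} [NormedAddCommGroup E]
    [NormedSpace ℝ E] [CompleteSpace E] {η : ℝ} (hη : 0 < η) {f : (Fin m → ℝ) → E}
    (hf : Integrable fun u => rexp (-(∑ i, u i ^ 2) / (2 * η ^ 2)) • f u) :
    Tendsto
      (fun k : ℕ => (Bvol (m + k) (√(m + k) * η))⁻¹ •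
        ∫ τ in euclBall (m + k) (√(m + k) * η), f (fun i => τ (Fin.castAdd k i)))
      atTop
      (𝓝 (∫ u, ((2 * π * η ^ 2) ^ (-(m : ℝ) / 2) *
        rexp (-(∑ i, u i ^ 2) / (2 * η ^ 2))) • f u)) := by
  have hpos : 0 < (2 * π * η ^ 2) ^ ((m : ℝ) / 2) := by positivity
  have hmass := tendsto_integral_sliceRatio (ι := Fin m) m.cast_nonneg hη.ne'
  rw [Fintype.card_fin] at hmass
  have hlim := (hmass.inv₀ hpos.ne').smul (tendsto_integral_sliceRatio_smul m.cast_nonneg hf)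
  rw [← rpow_neg (by positivity), ← neg_div, ← integral_smul] at hlim
  simp only [mul_smul]
  refine hlim.congr' ?_
  filter_upwards [eventually_ne_atTop 0] with k hk
  exact (inv_Bvol_smul_setIntegral_euclBall hk (by positivity)
    (aestronglyMeasurable_exp_smul_iff.1 hf.1)).symm

/-- Gaussian limit of ball averages.  For a bounded measurable `f : ℝ^m → ℝ` and
`η > 0`, the average of `f(τ₁, …, τ_m)` over the `n`-dimensional ball of radius `√n · η`
converges, as the dimension `n = m + k → ∞`, to the integral of `f` against the i.i.d.
`N(0, η²)` Gaussian density on `ℝ^m`. -/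
theorem ball_average_gaussian_limit {m : ℕ} (hm : 1 ≤ m) (η : ℝ) (hη : 0 < η)
    (f : (Fin m → ℝ) → ℝ) (hfm : Measurable f) (M : ℝ) (hfb : ∀ x, |f x| ≤ M) :
    Tendsto
      (fun k : ℕ =>
        (Bvol (m + k) (Real.sqrt (m + k) * η))⁻¹ *
          ∫ τ in euclBall (m + k) (Real.sqrt (m + k) * η),
            f (fun i => τ (Fin.castLE (Nat.le_add_right m k) i)))
      atTop
      (𝓝 (∫ u : Fin m → ℝ, f u * ((2 * Real.pi * η ^ 2) ^ (-(m : ℝ) / 2) *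
        Real.exp (-(∑ i, (u i) ^ 2) / (2 * η ^ 2))))) := by
  have hf : Integrable fun u => rexp (-(∑ i, u i ^ 2) / (2 * η ^ 2)) • f u :=
    (integrable_exp_neg_sum_sq_div hη.ne').smul_bdd M hfm.aestronglyMeasurable (.of_forall hfb)
  simpa only [smul_eq_mul, mul_comm (f _), Fin.castAdd] using
    ball_average_gaussian_limit_general hη hf
end
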